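/- Let 𝒯 be a rooted tree with n vertices. Then p[𝒯](x) = Σ_{𝒯_* ∈ ℱ(𝒯)} (−1)^{|L(𝒯_*)| + 1} x^{|𝒯_*|}, where the sum ranges over all faithful subtrees 𝒯_* of 𝒯, L(𝒯_*) denotes the set of leaves of 𝒯_* and |𝒯_*| its number of vertices. In particular, the degree of p[𝒯] equals n, and the coefficient of x^j in p[𝒯] vanishes for all j ≤ dist(root, L(𝒯)), the graph distance from the root to the nearest leaf of 𝒯. -/

import Mathlib

/-- A rooted tree: a finite tree with a distinguished root vertex, given by the (ordered)
list of subtrees rooted at the children of the root. -/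
inductive RTree : Type where
  | node : List RTree → RTree

namespace RTree

mutual
/-- The tree polynomial `p[𝒯] ∈ ℤ[x]`: `p = x` for a single vertex, and
`p[𝒯] = x (1 − ∏ᵢ (1 − p[𝒯ᵢ]))` when the subtrees rooted at the children of the root are
`𝒯₁, …, 𝒯ᵣ`. -/
noncomputable def treePoly : RTree → Polynomial ℤ
  | .node [] => Polynomial.X
  | .node (t :: ts) => Polynomial.X * (1 - prodPoly (t :: ts))
  termination_by t => sizeOf t

/-- `∏ᵢ (1 − p[𝒯ᵢ])` over a list of trees. -/
noncomputable def prodPoly : List RTree → Polynomial ℤ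
  | [] => 1
  | t :: ts => (1 - treePoly t) * prodPoly ts
  termination_by l => sizeOf l
end

mutual
/-- The set of vertex addresses of a rooted tree: a vertex is addressed by the list of
child indices on the path from the root to it (so the root has address `[]`). -/
def vertexFinset : RTree → Finset (List ℕ)
  | .node ts => insert [] (childVerts ts 0)
  termination_by t => sizeOf t

def childVerts : List RTree → ℕ → Finset (List ℕ)
  | [], _ => ∅
  | t :: ts, i => (vertexFinset t).image (List.cons i) ∪ childVerts ts (i + 1)
  termination_by l _ => sizeOf l
end

mutual
/-- The subtree rooted at a given vertex address, if the address is valid. -/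
def subtreeAt : RTree → List ℕ → Option RTree
  | t, [] => some t
  | .node ts, i :: l => subtreeAtAux ts i l
  termination_by t _ => sizeOf t

def subtreeAtAux : List RTree → ℕ → List ℕ → Option RTree
  | [], _, _ => none
  | t :: _, 0, l => subtreeAt t l
  | _ :: ts, i + 1, l => subtreeAtAux ts i l
  termination_by l _ _ => sizeOf l
end

/-- Whether a tree consists of a single vertex (i.e. its root is a leaf). -/
def isLeafTree : RTree → Bool
  | .node [] => true
  | .node (_ :: _) => false

/-- The set of (addresses of) leaves of a rooted tree: vertices with no children. -/
def leafFinset (t : RTree) : Finset (List ℕ) :=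
  (vertexFinset t).filter (fun l => (subtreeAt t l).any isLeafTree = true)

/-- The set of all prefixes of an address: the set of vertices of the path from the root
to the vertex with this address. -/
def prefixFinset (l : List ℕ) : Finset (List ℕ) :=
  (Finset.range (l.length + 1)).image (fun k => l.take k)

end RTree

namespace RTree

/-- A (vertex set of a) faithful subtree of `t`: a nonempty union of vertex sets of
root-to-leaf paths of `t`. -/
def Faithful (t : RTree) (F : Finset (List ℕ)) : Prop :=
  ∃ Ls : Finset (List ℕ), Ls.Nonempty ∧ Ls ⊆ leafFinset t ∧ F = Ls.biUnion prefixFinset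

open scoped Classical in
/-- The leaves of a subtree given by its vertex set `F`: the vertices of `F` having no
child (i.e. no one-step extension) inside `F`. -/
noncomputable def subtreeLeaves (F : Finset (List ℕ)) : Finset (List ℕ) :=
  F.filter (fun v => ∀ w ∈ F, ∀ i : ℕ, w ≠ v ++ [i])

end RTree

namespace RTree

def leavesL : List RTree → ℕ → Finset (List ℕ)
  | [], _ => ∅
  | t :: ts, i => (leafFinset t).image (List.cons i) ∪ leavesL ts (i + 1)

theorem mem_childVerts (ts : List RTree) (i : ℕ) (v : List ℕ) : v ∈ childVerts ts i ↔
    ∃ k l t, v = (i + k) :: l ∧ ts[k]? = some t ∧ l ∈ vertexFinset t := by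
  induction ts generalizing i with
  | nil => simp [childVerts]
  | cons t ts ih =>
    rw [childVerts, Finset.mem_union, ih, Finset.mem_image]
    constructor
    · rintro (⟨l, hl, rfl⟩ | ⟨k, l, t', rfl, h, hl⟩)
      · exact ⟨0, l, t, by simp, by simp, hl⟩
      · exact ⟨k + 1, l, t', by simp; omega, by simpa using h, hl⟩
    · rintro ⟨k, l, t', rfl, h, hl⟩
      cases k with
      | zero => left; simp at h; subst h; exact ⟨l, hl, by simp⟩
      | succ k => right; exact ⟨k, l, t', by simp; omega, by simpa using h, hl⟩

theorem mem_leavesL (ts : List RTree) (i : ℕ) (v : List ℕ) : v ∈ leavesL ts i ↔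
    ∃ k l t, v = (i + k) :: l ∧ ts[k]? = some t ∧ l ∈ leafFinset t := by
  induction ts generalizing i with
  | nil => simp [leavesL]
  | cons t ts ih =>
    rw [leavesL, Finset.mem_union, ih, Finset.mem_image]
    constructor
    · rintro (⟨l, hl, rfl⟩ | ⟨k, l, t', rfl, h, hl⟩)
      · exact ⟨0, l, t, by simp, by simp, hl⟩
      · exact ⟨k + 1, l, t', by simp; omega, by simpa using h, hl⟩
    · rintro ⟨k, l, t', rfl, h, hl⟩
      cases k with
      | zero => left; simp at h; subst h; exact ⟨l, hl, by simp⟩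
      | succ k => right; exact ⟨k, l, t', by simp; omega, by simpa using h, hl⟩

theorem subtreeAtAux_eq (ts : List RTree) (k : ℕ) (l : List ℕ) :
    subtreeAtAux ts k l = ts[k]?.bind (fun t => subtreeAt t l) := by
  induction ts generalizing k with
  | nil => simp [subtreeAtAux]
  | cons t ts ih =>
    cases k with
    | zero => simp [subtreeAtAux]
    | succ k => simp [subtreeAtAux, ih]

theorem leafFinset_nil : leafFinset (.node []) = {[]} := by
  ext v
  simp only [leafFinset, vertexFinset, childVerts, Finset.mem_filter]
  constructor
  · rintro ⟨h, -⟩; simpa using h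
  · intro h
    simp at h; subst h
    simp [subtreeAt, isLeafTree]

theorem leafFinset_cons (t : RTree) (ts : List RTree) :
    leafFinset (.node (t :: ts)) = leavesL (t :: ts) 0 := by
  ext v
  rw [mem_leavesL]
  simp only [leafFinset, vertexFinset, Finset.mem_filter, Finset.mem_insert, mem_childVerts]
  constructor
  · rintro ⟨rfl | ⟨k, l, t', rfl, h, hl⟩, h2⟩
    · simp [subtreeAt, isLeafTree] at h2
    · refine ⟨k, l, t', rfl, h, hl, ?_⟩
      simpa [subtreeAt, subtreeAtAux_eq, h] using h2
  · rintro ⟨k, l, t', rfl, h, hl, h2⟩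
    refine ⟨Or.inr ⟨k, l, t', rfl, h, hl⟩, ?_⟩
    simpa [subtreeAt, subtreeAtAux_eq, h] using h2

theorem mem_prefixFinset (l v : List ℕ) : v ∈ prefixFinset l ↔ v <+: l := by
  simp only [prefixFinset, Finset.mem_image, Finset.mem_range]
  constructor
  · rintro ⟨k, -, rfl⟩; exact List.take_prefix k l
  · intro h
    exact ⟨v.length, by have := h.length_le; omega, (List.prefix_iff_eq_take.mp h).symm⟩

/-- Forest version of faithfulness (possibly empty, roots omitted). -/
def FaithL (ts : List RTree) (i : ℕ) (G : Finset (List ℕ)) : Prop :=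
  ∃ Ls : Finset (List ℕ), Ls ⊆ leavesL ts i ∧ ∀ v, v ∈ G ↔ v ≠ [] ∧ ∃ l ∈ Ls, v <+: l

theorem faithful_iff (t : RTree) (F : Finset (List ℕ)) : Faithful t F ↔
    ∃ Ls : Finset (List ℕ), Ls.Nonempty ∧ Ls ⊆ leafFinset t ∧ ∀ v, v ∈ F ↔ ∃ l ∈ Ls, v <+: l := by
  simp only [Faithful, Finset.ext_iff, Finset.mem_biUnion, mem_prefixFinset]

theorem faithful_nil (F : Finset (List ℕ)) : Faithful (.node []) F ↔ F = {[]} := by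
  rw [faithful_iff, leafFinset_nil]
  constructor
  · rintro ⟨Ls, h1, h2, h3⟩
    have : Ls = {[]} := (Finset.Nonempty.subset_singleton_iff h1).mp h2
    subst this
    ext v; rw [h3]; simp
  · rintro rfl
    exact ⟨{[]}, by simp, by simp, by simp⟩

theorem faithL_nil (i : ℕ) (G : Finset (List ℕ)) : FaithL [] i G ↔ G = ∅ := by
  simp only [FaithL, leavesL]
  constructor
  · rintro ⟨Ls, h1, h2⟩
    have : Ls = ∅ := Finset.subset_empty.mp h1
    subst this
    ext v; rw [h2]; simp
  · rintro rfl
    exact ⟨∅, by simp, by simp⟩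

theorem faithL_singleton {ts : List RTree} {i : ℕ} {G : Finset (List ℕ)} (h : FaithL ts i G)
    (hG : G ≠ ∅) : ∃ k, [k] ∈ G := by
  obtain ⟨Ls, h1, h2⟩ := h
  obtain ⟨v, hv⟩ := Finset.nonempty_iff_ne_empty.mpr hG
  obtain ⟨hv0, l, hl, hvl⟩ := (h2 v).1 hv
  obtain ⟨k, l', t, rfl, -, -⟩ := (mem_leavesL _ _ _).1 (h1 hl)
  exact ⟨i + k, (h2 _).2 ⟨by simp, _, hl, by simp⟩⟩

theorem faithful_cons (t : RTree) (ts : List RTree) (F : Finset (List ℕ)) :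
    Faithful (.node (t :: ts)) F ↔ ∃ G, G ≠ ∅ ∧ FaithL (t :: ts) 0 G ∧ F = insert [] G := by
  rw [faithful_iff, leafFinset_cons]
  constructor
  · rintro ⟨Ls, ⟨l, hl⟩, h2, h3⟩
    have h0 : [] ∈ F := (h3 _).2 ⟨l, hl, by simp⟩
    refine ⟨F.erase [], ?_, ⟨Ls, h2, ?_⟩, ?_⟩
    · apply Finset.nonempty_iff_ne_empty.mp
      obtain ⟨k, l', t', hk, -, -⟩ := (mem_leavesL _ _ _).1 (h2 hl)
      exact ⟨l, Finset.mem_erase.2 ⟨by simp [hk], (h3 _).2 ⟨l, hl, by simp⟩⟩⟩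
    · intro v; rw [Finset.mem_erase, h3]
    · rw [Finset.insert_erase h0]
  · rintro ⟨G, hG, ⟨Ls, h1, h2⟩, rfl⟩
    obtain ⟨v, hv⟩ := Finset.nonempty_iff_ne_empty.mpr hG
    obtain ⟨-, l, hl, -⟩ := (h2 v).1 hv
    refine ⟨Ls, ⟨l, hl⟩, h1, ?_⟩
    intro v
    rw [Finset.mem_insert, h2]
    by_cases hv : v = []
    · subst hv; simp; exact ⟨l, hl⟩
    · simp [hv]

theorem faithL_cons (t : RTree) (ts : List RTree) (i : ℕ) (G : Finset (List ℕ)) :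
    FaithL (t :: ts) i G ↔ ∃ A B, (A = ∅ ∨ Faithful t A) ∧ FaithL ts (i + 1) B ∧
      G = A.image (List.cons i) ∪ B := by
  constructor
  · rintro ⟨Ls, h1, h2⟩
    have hsub : ∀ l ∈ Ls, (∃ l' ∈ leafFinset t, l = i :: l') ∨ l ∈ leavesL ts (i + 1) := by
      intro l hl
      have := h1 hl
      rw [leavesL, Finset.mem_union, Finset.mem_image] at this
      rcases this with ⟨l', h, rfl⟩ | h
      · exact Or.inl ⟨l', h, rfl⟩
      · exact Or.inr h
    set L1 := (leafFinset t).filter (fun l => i :: l ∈ Ls) with hL1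
    set L2 := Ls.filter (fun l => l ∈ leavesL ts (i + 1)) with hL2
    refine ⟨L1.biUnion prefixFinset, (L2.biUnion prefixFinset).erase [], ?_,
      ⟨L2, fun l hl => (Finset.mem_filter.1 hl).2, ?_⟩, ?_⟩
    · rcases Finset.eq_empty_or_nonempty L1 with h | h
      · left; simp [h]
      · right; exact ⟨L1, h, Finset.filter_subset _ _, rfl⟩
    · intro v; simp [mem_prefixFinset]
    · ext v
      rw [h2]
      simp only [Finset.mem_union, Finset.mem_image, Finset.mem_biUnion, mem_prefixFinset,
        Finset.mem_erase]
      constructor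
      · rintro ⟨hv, l, hl, hvl⟩
        rcases hsub l hl with ⟨l', hl', rfl⟩ | h
        · left
          cases v with
          | nil => exact absurd rfl hv
          | cons a v =>
            rw [List.cons_prefix_cons] at hvl
            obtain ⟨rfl, hvl⟩ := hvl
            exact ⟨v, ⟨l', Finset.mem_filter.2 ⟨hl', hl⟩, hvl⟩, rfl⟩
        · right
          exact ⟨hv, l, Finset.mem_filter.2 ⟨hl, h⟩, hvl⟩
      · rintro (⟨v', ⟨l, hl, hvl⟩, rfl⟩ | ⟨hv, l, hl, hvl⟩)
        · exact ⟨by simp, i :: l, (Finset.mem_filter.1 hl).2, by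
            rw [List.cons_prefix_cons]; exact ⟨rfl, hvl⟩⟩
        · exact ⟨hv, l, (Finset.mem_filter.1 hl).1, hvl⟩
  · rintro ⟨A, B, hA, ⟨L2, h1, h2⟩, rfl⟩
    have hA' : ∃ L1 ⊆ leafFinset t, ∀ v, v ∈ A ↔ ∃ l ∈ L1, v <+: l := by
      rcases hA with rfl | h
      · exact ⟨∅, by simp, by simp⟩
      · obtain ⟨L1, -, h, h'⟩ := (faithful_iff _ _).1 h
        exact ⟨L1, h, h'⟩
    obtain ⟨L1, h3, h4⟩ := hA'
    refine ⟨L1.image (List.cons i) ∪ L2, ?_, ?_⟩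
    · rw [leavesL]
      exact Finset.union_subset_union (Finset.image_subset_image h3) h1
    · intro v
      simp only [Finset.mem_union, Finset.mem_image, h2, h4]
      constructor
      · rintro (⟨v', ⟨l, hl, hvl⟩, rfl⟩ | ⟨hv, l, hl, hvl⟩)
        · exact ⟨by simp, i :: l, Or.inl ⟨l, hl, rfl⟩, by
            rw [List.cons_prefix_cons]; exact ⟨rfl, hvl⟩⟩
        · exact ⟨hv, l, Or.inr hl, hvl⟩
      · rintro ⟨hv, l, ⟨l', hl', rfl⟩ | hl, hvl⟩
        · left
          cases v with
          | nil => exact absurd rfl hv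
          | cons a v =>
            rw [List.cons_prefix_cons] at hvl
            obtain ⟨rfl, hvl⟩ := hvl
            exact ⟨v, ⟨l', hl', hvl⟩, rfl⟩
        · exact Or.inr ⟨hv, l, hl, hvl⟩

mutual
theorem faithful_subset (t : RTree) (F : Finset (List ℕ)) (h : Faithful t F) :
    F ⊆ vertexFinset t := by
  match t with
  | .node [] =>
    rw [faithful_nil] at h; subst h; simp [vertexFinset]
  | .node (t :: ts) =>
    obtain ⟨G, -, hG, rfl⟩ := (faithful_cons _ _ _).1 h
    rw [vertexFinset]
    exact Finset.insert_subset_insert _ (faithL_subset (t :: ts) 0 G hG)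
  termination_by sizeOf t

theorem faithL_subset (ts : List RTree) (i : ℕ) (G : Finset (List ℕ)) (h : FaithL ts i G) :
    G ⊆ childVerts ts i := by
  match ts with
  | [] => rw [faithL_nil] at h; subst h; simp
  | t :: ts =>
    obtain ⟨A, B, hA, hB, rfl⟩ := (faithL_cons _ _ _ _).1 h
    rw [childVerts]
    refine Finset.union_subset_union (Finset.image_subset_image ?_) (faithL_subset ts (i + 1) B hB)
    rcases hA with rfl | hA
    · simp
    · exact faithful_subset t A hA
  termination_by sizeOf ts
end

/-- The weight of a vertex set. -/
noncomputable def wt (F : Finset (List ℕ)) : Polynomial ℤ :=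
  (-1 : Polynomial ℤ) ^ (subtreeLeaves F).card * Polynomial.X ^ F.card

theorem mem_subtreeLeaves (F : Finset (List ℕ)) (v : List ℕ) :
    v ∈ subtreeLeaves F ↔ v ∈ F ∧ ∀ i : ℕ, v ++ [i] ∉ F := by
  simp only [subtreeLeaves, Finset.mem_filter]
  refine and_congr_right fun _ => ⟨fun h i hi => h _ hi i rfl, ?_⟩
  rintro h w hw i rfl
  exact h i hw

theorem cons_injective (i : ℕ) : Function.Injective (List.cons i) := fun _ _ h => by simpa using h

theorem wt_union (i : ℕ) (A B : Finset (List ℕ)) (hB : ∀ v ∈ B, ∃ k l, v = k :: l ∧ i < k) :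
    wt (A.image (List.cons i) ∪ B) = wt A * wt B := by
  have hd : ∀ B' ⊆ B, ∀ A' : Finset (List ℕ), Disjoint (A'.image (List.cons i)) B' := by
    intro B' hB' A'
    rw [Finset.disjoint_left]
    intro v hv hv'
    obtain ⟨k, l, rfl, h⟩ := hB v (hB' hv')
    obtain ⟨l', -, h'⟩ := Finset.mem_image.1 hv
    simp at h'
    omega
  have hL : subtreeLeaves (A.image (List.cons i) ∪ B)
      = (subtreeLeaves A).image (List.cons i) ∪ subtreeLeaves B := by
    ext v
    simp only [Finset.mem_union, mem_subtreeLeaves, Finset.mem_image]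
    constructor
    · rintro ⟨⟨a, ha, rfl⟩ | hv, h⟩
      · exact Or.inl ⟨a, ⟨ha, fun j hj => h j (Or.inl ⟨_, hj, by simp⟩)⟩, rfl⟩
      · exact Or.inr ⟨hv, fun j hj => h j (Or.inr hj)⟩
    · rintro (⟨a, ⟨ha, h⟩, rfl⟩ | ⟨hv, h⟩)
      · refine ⟨Or.inl ⟨a, ha, rfl⟩, ?_⟩
        rintro j (⟨b, hb, h'⟩ | hj)
        · simp at h'; subst h'; exact h j hb
        · obtain ⟨k, l, h', hk⟩ := hB _ hj
          simp at h'; omega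
      · refine ⟨Or.inr hv, ?_⟩
        rintro j (⟨b, hb, h'⟩ | hj)
        · obtain ⟨k, l, rfl, hk⟩ := hB _ hv
          simp at h'; omega
        · exact h j hj
  have hs : subtreeLeaves B ⊆ B := fun v hv => ((mem_subtreeLeaves _ _).1 hv).1
  unfold wt
  rw [hL, Finset.card_union_of_disjoint (hd _ hs _), Finset.card_union_of_disjoint (hd B subset_rfl _),
    Finset.card_image_of_injective _ (cons_injective i),
    Finset.card_image_of_injective _ (cons_injective i), pow_add, pow_add]
  ring

theorem wt_insert (G : Finset (List ℕ)) (h0 : [] ∉ G) (h : ∃ k, [k] ∈ G) :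
    wt (insert [] G) = Polynomial.X * wt G := by
  have hL : subtreeLeaves (insert [] G) = subtreeLeaves G := by
    ext v
    simp only [mem_subtreeLeaves, Finset.mem_insert]
    constructor
    · rintro ⟨rfl | hv, h'⟩
      · obtain ⟨k, hk⟩ := h
        exact absurd (Or.inr hk) (h' k)
      · exact ⟨hv, fun j hj => h' j (Or.inr hj)⟩
    · rintro ⟨hv, h'⟩
      exact ⟨Or.inr hv, fun j hj => by simpa [h' j] using hj⟩
  unfold wt
  rw [hL, Finset.card_insert_of_notMem h0, pow_succ]
  ring

theorem wt_empty : wt ∅ = 1 := by simp [wt, subtreeLeaves]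

theorem wt_single : wt {[]} = - Polynomial.X := by
  have : subtreeLeaves {[]} = {[]} := by
    ext v; simp +contextual [mem_subtreeLeaves]
  simp [wt, this]

open scoped Classical in
noncomputable def S (t : RTree) : Finset (Finset (List ℕ)) :=
  (vertexFinset t).powerset.filter (Faithful t)

open scoped Classical in
noncomputable def SL (ts : List RTree) (i : ℕ) : Finset (Finset (List ℕ)) :=
  (childVerts ts i).powerset.filter (FaithL ts i)

theorem mem_S (t : RTree) (F) : F ∈ S t ↔ Faithful t F := by
  simp only [S, Finset.mem_filter, Finset.mem_powerset]
  exact ⟨fun h => h.2, fun h => ⟨faithful_subset _ _ h, h⟩⟩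

theorem mem_SL (ts : List RTree) (i : ℕ) (F) : F ∈ SL ts i ↔ FaithL ts i F := by
  simp only [SL, Finset.mem_filter, Finset.mem_powerset]
  exact ⟨fun h => h.2, fun h => ⟨faithL_subset _ _ _ h, h⟩⟩

theorem not_faithful_empty (t : RTree) : ¬ Faithful t ∅ := by
  rw [faithful_iff]
  rintro ⟨Ls, ⟨l, hl⟩, -, h⟩
  simpa using (h l).2 ⟨l, hl, by simp⟩

theorem faithL_heads {ts : List RTree} {i : ℕ} {G : Finset (List ℕ)} (h : FaithL ts (i + 1) G) :
    ∀ v ∈ G, ∃ k l, v = k :: l ∧ i < k := by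
  intro v hv
  obtain ⟨k, l, t, rfl, -, -⟩ := (mem_childVerts _ _ _).1 (faithL_subset _ _ _ h hv)
  exact ⟨_, _, rfl, by omega⟩

theorem faithL_nil_notMem {ts : List RTree} {i : ℕ} {G : Finset (List ℕ)} (h : FaithL ts i G) :
    [] ∉ G := by
  intro hv
  obtain ⟨k, l, t, h, -, -⟩ := (mem_childVerts _ _ _).1 (faithL_subset _ _ _ h hv)
  simp at h

theorem faithL_empty (ts : List RTree) (i : ℕ) : FaithL ts i ∅ := ⟨∅, by simp, by simp⟩

theorem S_cons (t : RTree) (ts : List RTree) :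
    S (.node (t :: ts)) = ((SL (t :: ts) 0).erase ∅).image (insert []) := by
  ext F
  simp only [mem_S, faithful_cons, Finset.mem_image, Finset.mem_erase, mem_SL]
  constructor
  · rintro ⟨G, h1, h2, rfl⟩; exact ⟨G, ⟨h1, h2⟩, rfl⟩
  · rintro ⟨G, ⟨h1, h2⟩, rfl⟩; exact ⟨G, h1, h2, rfl⟩

theorem SL_cons (t : RTree) (ts : List RTree) (i : ℕ) :
    SL (t :: ts) i = ((insert ∅ (S t)) ×ˢ SL ts (i + 1)).image
      (fun p => p.1.image (List.cons i) ∪ p.2) := by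
  ext F
  simp only [mem_SL, faithL_cons, Finset.mem_image, Finset.mem_product, Finset.mem_insert, mem_S,
    Prod.exists]
  constructor
  · rintro ⟨A, B, h1, h2, rfl⟩; exact ⟨A, B, ⟨h1, h2⟩, rfl⟩
  · rintro ⟨A, B, ⟨h1, h2⟩, rfl⟩; exact ⟨A, B, h1, h2, rfl⟩

theorem union_inj (i : ℕ) (A A' B B' : Finset (List ℕ))
    (hB : ∀ v ∈ B, ∃ k l, v = k :: l ∧ i < k) (hB' : ∀ v ∈ B', ∃ k l, v = k :: l ∧ i < k)
    (h : A.image (List.cons i) ∪ B = A'.image (List.cons i) ∪ B') : A = A' ∧ B = B' := by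
  have key : ∀ A B : Finset (List ℕ), (∀ v ∈ B, ∃ k l, v = k :: l ∧ i < k) →
      (∀ v, v ∈ A ↔ i :: v ∈ A.image (List.cons i) ∪ B) ∧
      (∀ v, v ∈ B ↔ v ∈ A.image (List.cons i) ∪ B ∧ ∀ l, v ≠ i :: l) := by
    intro A B hB
    have h1 : ∀ v, i :: v ∉ B := by
      intro v hv
      obtain ⟨k, l, h, hk⟩ := hB _ hv
      simp at h; omega
    refine ⟨fun v => by simp [h1], fun v => ?_⟩
    simp only [Finset.mem_union, Finset.mem_image]
    constructor
    · intro hv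
      refine ⟨Or.inr hv, ?_⟩
      rintro l rfl; exact h1 _ hv
    · rintro ⟨⟨l, -, rfl⟩ | hv, h⟩
      · exact absurd rfl (h l)
      · exact hv
  constructor
  · ext v; rw [(key A B hB).1, (key A' B' hB').1, h]
  · ext v; rw [(key A B hB).2, (key A' B' hB').2, h]

mutual
theorem sum_S (t : RTree) : ∑ F ∈ S t, wt F = - treePoly t := by
  match t with
  | .node [] =>
    have : S (.node []) = {{[]}} := by ext F; simp [mem_S, faithful_nil]
    rw [this, Finset.sum_singleton, wt_single, treePoly]
  | .node (t :: ts) =>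
    rw [S_cons, Finset.sum_image, treePoly, ← sum_SL (t :: ts) 0,
      ← Finset.add_sum_erase _ _ ((mem_SL (t :: ts) 0 ∅).2 (faithL_empty _ _)), wt_empty,
      Finset.sum_congr rfl (g := fun G => Polynomial.X * wt G), ← Finset.mul_sum]
    · ring
    · intro G hG
      rw [Finset.mem_erase, mem_SL] at hG
      exact wt_insert G (faithL_nil_notMem hG.2) (faithL_singleton hG.2 hG.1)
    · intro G hG G' hG' h
      rw [Finset.mem_coe, Finset.mem_erase, mem_SL] at hG hG'
      have := congrArg (fun F => Finset.erase F []) h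
      simpa [Finset.erase_insert (faithL_nil_notMem hG.2),
        Finset.erase_insert (faithL_nil_notMem hG'.2)] using this
  termination_by sizeOf t

theorem sum_SL (ts : List RTree) (i : ℕ) : ∑ G ∈ SL ts i, wt G = prodPoly ts := by
  match ts with
  | [] =>
    have : SL [] i = {∅} := by ext F; simp [mem_SL, faithL_nil]
    rw [this, Finset.sum_singleton, wt_empty, prodPoly]
  | t :: ts =>
    rw [SL_cons, Finset.sum_image, prodPoly, ← sum_SL ts (i + 1),
      Finset.sum_congr rfl (g := fun p => wt p.1 * wt p.2), Finset.sum_product,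
      ← Finset.sum_mul_sum, Finset.sum_insert, sum_S t, wt_empty]
    · ring
    · rw [mem_S]; exact not_faithful_empty t
    · intro p hp
      rw [Finset.mem_product, mem_SL] at hp
      exact wt_union i _ _ (faithL_heads hp.2)
    · intro p hp q hq h
      rw [Finset.mem_coe, Finset.mem_product, mem_SL] at hp hq
      have := union_inj i _ _ _ _ (faithL_heads hp.2) (faithL_heads hq.2) h
      exact Prod.ext this.1 this.2
  termination_by sizeOf ts
end

theorem natDegree_one_sub (p : Polynomial ℤ) : (1 - p).natDegree = p.natDegree := by
  rw [← Polynomial.natDegree_neg, neg_sub]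
  exact Polynomial.natDegree_sub_C (a := 1)

theorem card_vertexFinset (ts : List RTree) :
    (vertexFinset (.node ts)).card = (childVerts ts 0).card + 1 := by
  rw [vertexFinset, Finset.card_insert_of_notMem]
  rw [mem_childVerts]
  rintro ⟨k, l, t, h, -, -⟩
  simp at h

theorem card_childVerts (t : RTree) (ts : List RTree) (i : ℕ) :
    (childVerts (t :: ts) i).card = (vertexFinset t).card + (childVerts ts (i + 1)).card := by
  rw [childVerts, Finset.card_union_of_disjoint,
    Finset.card_image_of_injective _ (cons_injective i)]
  rw [Finset.disjoint_left]
  intro v hv hv'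
  obtain ⟨l', -, rfl⟩ := Finset.mem_image.1 hv
  obtain ⟨k, l, t, h, -, -⟩ := (mem_childVerts _ _ _).1 hv'
  simp at h
  omega

theorem ne_zero_of_card {p : Polynomial ℤ} {t : RTree}
    (h : p.natDegree = (vertexFinset t).card) : 1 - p ≠ 0 := by
  intro h0
  have h1 : (1 - p).natDegree = 0 := by rw [h0]; simp
  rw [natDegree_one_sub, h] at h1
  obtain ⟨ts⟩ := t
  rw [card_vertexFinset] at h1
  omega

mutual
theorem natDegree_treePoly (t : RTree) : (treePoly t).natDegree = (vertexFinset t).card := by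
  match t with
  | .node [] => simp [treePoly, vertexFinset, childVerts]
  | .node (t :: ts) =>
    have h := natDegree_prodPoly (t :: ts) 0
    have hne : (1 - prodPoly (t :: ts)) ≠ 0 := by
      intro h0
      have h1 : (1 - prodPoly (t :: ts)).natDegree = 0 := by rw [h0]; simp
      rw [natDegree_one_sub, h.2, card_childVerts] at h1
      obtain ⟨us⟩ := t
      rw [card_vertexFinset] at h1
      omega
    rw [treePoly, Polynomial.natDegree_X_mul hne, natDegree_one_sub, h.2, card_vertexFinset]
  termination_by sizeOf t

theorem natDegree_prodPoly (ts : List RTree) (i : ℕ) :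
    prodPoly ts ≠ 0 ∧ (prodPoly ts).natDegree = (childVerts ts i).card := by
  match ts with
  | [] => simp [prodPoly, childVerts]
  | t :: ts =>
    have h := natDegree_treePoly t
    have h' := natDegree_prodPoly ts (i + 1)
    have hne := ne_zero_of_card h
    rw [prodPoly]
    refine ⟨mul_ne_zero hne h'.1, ?_⟩
    rw [Polynomial.natDegree_mul hne h'.1, natDegree_one_sub, h, h'.2, card_childVerts]
  termination_by sizeOf ts
end

theorem coeff_treePoly (t : RTree) (j : ℕ) (hj : ∀ l ∈ leafFinset t, j ≤ l.length) :
    (treePoly t).coeff j = 0 := by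
  have h := sum_S t
  rw [eq_comm, neg_eq_iff_eq_neg] at h
  rw [h, Polynomial.coeff_neg, Polynomial.finsetSum_coeff, neg_eq_zero]
  refine Finset.sum_eq_zero fun F hF => ?_
  obtain ⟨Ls, ⟨l, hl⟩, h2, rfl⟩ := (mem_S _ _).1 hF
  have hc : l.length + 1 ≤ (Ls.biUnion prefixFinset).card := by
    have h3 : (prefixFinset l).card = l.length + 1 := by
      rw [prefixFinset, Finset.card_image_of_injOn, Finset.card_range]
      intro a ha b hb hab
      have := congrArg List.length hab
      simp at this ha hb
      omega
    rw [← h3]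
    exact Finset.card_le_card (Finset.subset_biUnion_of_mem prefixFinset hl)
  have := hj l (h2 hl)
  rw [wt, Polynomial.coeff_mul_X_pow', if_neg (by omega)]

end RTree

open scoped Classical in
/-- For a rooted tree `𝒯` on `n` vertices,
`p[𝒯](x) = Σ_{𝒯_* faithful} (−1)^{|L(𝒯_*)|+1} x^{|𝒯_*|}`; in particular `deg p[𝒯] = n`
and the coefficient of `x^j` vanishes for all `j ≤ dist(root, L(𝒯))` (equivalently, for
all `j` not exceeding the length of every root-to-leaf path). -/
theorem stmt8 (t : RTree) :
    RTree.treePoly t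
        = ∑ F ∈ (RTree.vertexFinset t).powerset.filter (RTree.Faithful t),
            (-1 : Polynomial ℤ) ^ ((RTree.subtreeLeaves F).card + 1) * Polynomial.X ^ F.card ∧
    (RTree.treePoly t).natDegree = (RTree.vertexFinset t).card ∧
    ∀ j : ℕ, (∀ ℓ ∈ RTree.leafFinset t, j ≤ ℓ.length) → (RTree.treePoly t).coeff j = 0 := by
  refine ⟨?_, RTree.natDegree_treePoly t, RTree.coeff_treePoly t⟩
  have h := RTree.sum_S t
  rw [eq_comm, neg_eq_iff_eq_neg, ← Finset.sum_neg_distrib] at h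
  rw [h]
  refine Finset.sum_congr rfl fun F _ => ?_
  rw [RTree.wt, pow_succ]
  ring
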